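/- Let ν > 0. There exist a C^∞ function h₀ : ℝ → ℝ that is 2π-periodic with ∫_{−π}^{π} h₀(x) dx = 0 and sup_{x ∈ ℝ} |h₀'(x)| < 1, a time t₀ > 0, and a function h : [0,t₀] × ℝ → ℝ, 2π-periodic in x and smooth, with h(0,·) = h₀, which is a classical solution of ∂_t h = ∂_x((∂_x h)³ − ∂_x h) − ν ∂_x⁴ h on [0,t₀] × ℝ, such that sup_{x ∈ ℝ} |∂_x h(t₀,x)| > 1. -/

import Mathlib

open Real MeasureTheory Set Filter

noncomputable section

/-!
Biharmonic dissipation has no maximum principle. Under `∂_t u = -∂_x⁴ u` the profile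
`9 cos x - cos 3x`, whose maximum `8` sits at `x = 0`, loses its subtracted mode `81` times faster
than its main one, so its value at `x = 0` grows. A multiple of it starts below `1` and rises above
`1`.

At high frequency the thin-film equation is a small perturbation of this linear flow: the
substitution `h(t, x) ↦ h(νK⁴t, Kx) / K` keeps slopes and turns
`∂_t h = ε ∂_x((∂_x h)³ - ∂_x h) - ∂_x⁴ h` with `ε = 1 / (νK²)` into the original equation. In
Duhamel form the slope solves `b = φ + ε F(b)`, where `φ` is the linear flow and `F` is smooth on a
Banach algebra of exponentially weighted Fourier coefficients. By the inverse function theorem there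
is a solution near `φ` for all small `ε`. The weights make it smooth in `x`, and the equation, which
expresses `∂_t` of any polynomial in the `x`-derivatives as another such polynomial, makes it smooth
in `t`.
-/

open scoped Topology BoundedContinuousFunction ContDiff

section PartialDerivatives

variable {𝕜 E : Type*} [RCLike 𝕜] [NormedAddCommGroup E] [NormedSpace 𝕜 E]

theorem hasStrictFDerivAt_of_partial_hasDerivAt {f ft fx : 𝕜 × 𝕜 → E} {p : 𝕜 × 𝕜}
    (hft : ∀ᶠ q in 𝓝 p, HasDerivAt (fun s => f (s, q.2)) (ft q) q.1)
    (hfx : ∀ᶠ q in 𝓝 p, HasDerivAt (fun y => f (q.1, y)) (fx q) q.2)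
    (ht : ContinuousAt ft p) (hx : ContinuousAt fx p) :
    HasStrictFDerivAt f ((ContinuousLinearMap.toSpanSingleton 𝕜 (ft p)).coprod
      (ContinuousLinearMap.toSpanSingleton 𝕜 (fx p))) p :=
  have span_continuous : Continuous (ContinuousLinearMap.toSpanSingleton 𝕜 : E → 𝕜 →L[𝕜] E) :=
    (ContinuousLinearMap.toSpanSingletonCLE (𝕜 := 𝕜) (E := E)).continuous
  hasStrictFDerivAt_uncurry_coprod (f := fun s y => f (s, y))
    (f₁ := fun s y => ContinuousLinearMap.toSpanSingleton 𝕜 (ft (s, y)))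
    (f₂ := fun s y => ContinuousLinearMap.toSpanSingleton 𝕜 (fx (s, y)))
    (hft.mono fun _ h => h.hasFDerivAt) (hfx.mono fun _ h => h.hasFDerivAt)
    (span_continuous.continuousAt.comp ht) (span_continuous.continuousAt.comp hx)

theorem contDiffOn_infty_of_partial_mem {Ω : Set (𝕜 × 𝕜)} (hΩ : IsOpen Ω) {A : Set (𝕜 × 𝕜 → E)}
    (hcont : ∀ f ∈ A, ContinuousOn f Ω)
    (hft : ∀ f ∈ A, ∃ ft ∈ A, ∀ p ∈ Ω, HasDerivAt (fun s => f (s, p.2)) (ft p) p.1)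
    (hfx : ∀ f ∈ A, ∃ fx ∈ A, ∀ p ∈ Ω, HasDerivAt (fun y => f (p.1, y)) (fx p) p.2) :
    ∀ f ∈ A, ContDiffOn 𝕜 ∞ f Ω := by
  suffices h : ∀ n : ℕ, ∀ f ∈ A, ContDiffOn 𝕜 n f Ω from
    fun f hf => contDiffOn_infty.2 fun n => h n f hf
  intro n
  induction n with
  | zero => exact fun f hf => contDiffOn_zero.2 (hcont f hf)
  | succ n ih =>
    intro f hf
    obtain ⟨ft, ft_mem, hft⟩ := hft f hf
    obtain ⟨fx, fx_mem, hfx⟩ := hfx f hf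
    rw [Nat.cast_add_one, contDiffOn_succ_iff_hasFDerivWithinAt_of_uniqueDiffOn hΩ.uniqueDiffOn]
    refine ⟨fun h => absurd h (by simp), fun p =>
      (ContinuousLinearMap.toSpanSingleton 𝕜 (ft p)).coprod
        (ContinuousLinearMap.toSpanSingleton 𝕜 (fx p)), ?_, fun p hp => ?_⟩
    · rw [contDiffOn_clm_apply]
      intro v
      simp only [ContinuousLinearMap.coprod_apply, ContinuousLinearMap.toSpanSingleton_apply]
      exact (contDiffOn_const.smul (ih ft ft_mem)).add (contDiffOn_const.smul (ih fx fx_mem))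
    · have hΩp := hΩ.mem_nhds hp
      exact (hasStrictFDerivAt_of_partial_hasDerivAt
        (eventually_of_mem hΩp hft) (eventually_of_mem hΩp hfx)
        ((hcont ft ft_mem).continuousAt hΩp)
        ((hcont fx fx_mem).continuousAt hΩp)).hasFDerivAt.hasFDerivWithinAt

end PartialDerivatives

theorem iteratedDeriv_comp_mul_left {𝕜 F : Type*} [NontriviallyNormedField 𝕜]
    [NormedAddCommGroup F] [NormedSpace 𝕜 F] (n : ℕ) (f : 𝕜 → F) (c : 𝕜) :
    iteratedDeriv n (fun x => f (c * x)) = fun x => c ^ n • iteratedDeriv n f (c * x) := by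
  induction n with
  | zero => simp
  | succ n ih =>
    funext x
    rw [iteratedDeriv_succ, ih, deriv_fun_const_smul_field, deriv_comp_mul_left, smul_smul,
      ← pow_succ, iteratedDeriv_succ]

theorem exists_hasDerivAt_mem_adjoin {𝕜 α : Type*} [NontriviallyNormedField 𝕜] {S : Set (α → 𝕜)}
    {Ω : Set α} (γ : α → 𝕜 → α) (τ : α → 𝕜) (hγ : ∀ p, γ p (τ p) = p)
    (hS : ∀ f ∈ S, ∃ f' ∈ Algebra.adjoin 𝕜 S,
      ∀ p ∈ Ω, HasDerivAt (fun s => f (γ p s)) (f' p) (τ p))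
    {f : α → 𝕜} (hf : f ∈ Algebra.adjoin 𝕜 S) :
    ∃ f' ∈ Algebra.adjoin 𝕜 S, ∀ p ∈ Ω, HasDerivAt (fun s => f (γ p s)) (f' p) (τ p) := by
  induction hf using Algebra.adjoin_induction with
  | mem f hf => exact hS f hf
  | algebraMap r => exact ⟨0, zero_mem _, fun p _ => hasDerivAt_const (τ p) r⟩
  | add f g _ _ ihf ihg =>
    obtain ⟨f', hf', hf⟩ := ihf
    obtain ⟨g', hg', hg⟩ := ihg
    exact ⟨f' + g', add_mem hf' hg', fun p hp => (hf p hp).add (hg p hp)⟩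
  | mul f g f_mem g_mem ihf ihg =>
    obtain ⟨f', hf', hf⟩ := ihf
    obtain ⟨g', hg', hg⟩ := ihg
    refine ⟨f' * g + f * g', add_mem (mul_mem hf' g_mem) (mul_mem f_mem hg'), fun p hp => ?_⟩
    exact ((hf p hp).mul (hg p hp)).congr_deriv (by simp only [hγ, Pi.add_apply, Pi.mul_apply])

theorem setIntegral_eq_zero_of_odd {G E : Type*} [MeasurableSpace G] [AddGroup G] [MeasurableNeg G]
    [NormedAddCommGroup E] [NormedSpace ℝ E] (μ : Measure G) [μ.IsNegInvariant] {f : G → E}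
    (hf : f.Odd) {s : Set G} (hs : -s = s) : ∫ x in s, f x ∂μ = 0 := by
  have hneg := (Measure.measurePreserving_neg μ).setIntegral_preimage_emb
    (MeasurableEquiv.neg G).measurableEmbedding f s
  rw [neg_preimage, hs] at hneg
  simp only [hf _, integral_neg] at hneg
  have : IsAddTorsionFree E := .of_isTorsionFree ℝ E
  exact self_eq_neg.1 hneg.symm

theorem eventually_exists_eq_add_smul {𝕜 E : Type*} [RCLike 𝕜] [NormedAddCommGroup E]
    [NormedSpace 𝕜 E] [CompleteSpace E] {F : E → E} {φ : E} (hF : ContDiffAt 𝕜 1 F φ)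
    {U : Set E} (hU : U ∈ 𝓝 φ) : ∀ᶠ ε in 𝓝 (0 : 𝕜), ∃ b ∈ U, b = φ + ε • F b := by
  let Φ : 𝕜 × E → 𝕜 × E := fun p => (p.1, p.2 - p.1 • F p.2)
  have hΦ : HasStrictFDerivAt Φ ((ContinuousLinearMap.fst 𝕜 𝕜 E).prod
      (ContinuousLinearMap.snd 𝕜 𝕜 E -
        (ContinuousLinearMap.fst 𝕜 𝕜 E).smulRight (F φ))) (0, φ) := by
    have hF' : HasStrictFDerivAt (fun p : 𝕜 × E => F p.2)
        ((fderiv 𝕜 F φ).comp (ContinuousLinearMap.snd 𝕜 𝕜 E)) (0, φ) :=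
      (hF.hasStrictFDerivAt one_ne_zero).comp (0, φ) hasStrictFDerivAt_snd
    exact (hasStrictFDerivAt_fst.prodMk
      (hasStrictFDerivAt_snd.sub (hasStrictFDerivAt_fst.smul hF'))).congr_fderiv (by simp)
  have hsurj : Function.Surjective ((ContinuousLinearMap.fst 𝕜 𝕜 E).prod
      (ContinuousLinearMap.snd 𝕜 𝕜 E - (ContinuousLinearMap.fst 𝕜 𝕜 E).smulRight (F φ))) :=
    fun ⟨δ, β⟩ => ⟨(δ, β + δ • F φ), by simp⟩
  have himage : Φ '' (Prod.snd ⁻¹' U) ∈ 𝓝 (0, φ) := by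
    have := hΦ.map_nhds_eq_of_surj (LinearMap.range_eq_top.2 hsurj)
    simp only [Φ, zero_smul, sub_zero] at this
    rw [← this]
    exact image_mem_map (continuous_snd.continuousAt.preimage_mem_nhds hU)
  have hslice : Tendsto (fun ε : 𝕜 => (ε, φ)) (𝓝 0) (𝓝 (0, φ)) :=
    (Continuous.prodMk_left φ).tendsto 0
  filter_upwards [hslice himage] with ε ⟨⟨δ, b⟩, hb, hδb⟩
  obtain ⟨rfl, hφ⟩ := Prod.mk.inj hδb
  exact ⟨b, hb, sub_eq_iff_eq_add.1 hφ⟩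

theorem hasSum_tsum_mul_sub {G R : Type*} [AddCommGroup G] [NormedRing R] [CompleteSpace R]
    {f g : G → R} (hf : Summable fun k => ‖f k‖) (hg : Summable fun k => ‖g k‖) :
    HasSum (fun n => ∑' j, f j * g (n - j)) ((∑' k, f k) * ∑' k, g k) := by
  let shear : G × G ≃ G × G :=
    { toFun := fun p => (p.2, p.1 - p.2)
      invFun := fun p => (p.1 + p.2, p.1)
      left_inv := fun p => by simp
      right_inv := fun p => by simp }
  have hprod : HasSum (fun p : G × G => f p.1 * g p.2) ((∑' k, f k) * ∑' k, g k) := by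
    rw [tsum_mul_tsum_of_summable_norm hf hg]
    exact (summable_mul_of_summable_norm hf hg).hasSum
  have hshear : HasSum (fun p : G × G => f p.2 * g (p.1 - p.2)) ((∑' k, f k) * ∑' k, g k) :=
    shear.hasSum_iff.2 hprod
  exact hshear.prod_fiberwise fun n => (hshear.summable.prod_factor n).hasSum

theorem norm_ofReal_mul_exp_mul_I (a θ : ℝ) : ‖(a : ℂ) * Complex.exp (θ * Complex.I)‖ = ‖a‖ := by
  rw [norm_mul, Complex.norm_exp_ofReal_mul_I, mul_one, Complex.norm_real]

theorem tsum_ofReal_mul_exp_mul_I {ι : Type*} {a : ι → ℝ} (ha : Summable fun k => ‖a k‖)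
    (θ : ι → ℝ) : ∑' k, (a k : ℂ) * Complex.exp (θ k * Complex.I) =
      ⟨∑' k, a k * cos (θ k), ∑' k, a k * sin (θ k)⟩ := by
  have hsum : Summable fun k => (a k : ℂ) * Complex.exp (θ k * Complex.I) :=
    .of_norm (by simpa only [norm_ofReal_mul_exp_mul_I] using ha)
  apply Complex.ext
  · simp only [Complex.re_tsum hsum, Complex.re_ofReal_mul, Complex.exp_ofReal_mul_I_re]
  · simp only [Complex.im_tsum hsum, Complex.im_ofReal_mul, Complex.exp_ofReal_mul_I_im]

theorem hasSum_convolution_mul_cos {a b : ℤ → ℝ} (ha : Summable fun k => ‖a k‖)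
    (hb : Summable fun k => ‖b k‖) (hb_even : b.Even) (x : ℝ) :
    HasSum (fun n : ℤ => (∑' j, a j * b (n - j)) * cos (n * x))
      ((∑' k : ℤ, a k * cos (k * x)) * ∑' k : ℤ, b k * cos (k * x)) := by
  have hsin : ∑' k : ℤ, b k * sin (k * x) = 0 := by
    have hneg := (Equiv.neg ℤ).tsum_eq fun k : ℤ => b k * sin (k * x)
    simp only [Equiv.neg_apply, hb_even _, Int.cast_neg, neg_mul, sin_neg, mul_neg, tsum_neg]
      at hneg
    linarith
  have hterm (n j : ℤ) : (a j : ℂ) * Complex.exp ((j * x : ℝ) * Complex.I) *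
      ((b (n - j) : ℂ) * Complex.exp (((n - j : ℤ) * x : ℝ) * Complex.I)) =
      ((a j * b (n - j) : ℝ) : ℂ) * Complex.exp ((n * x : ℝ) * Complex.I) := by
    rw [mul_mul_mul_comm, ← Complex.exp_add, ← Complex.ofReal_mul]
    congr 2
    push_cast
    ring
  have hconv := hasSum_tsum_mul_sub
    (f := fun k : ℤ => (a k : ℂ) * Complex.exp ((k * x : ℝ) * Complex.I))
    (g := fun k : ℤ => (b k : ℂ) * Complex.exp ((k * x : ℝ) * Complex.I))
    (by simpa only [norm_ofReal_mul_exp_mul_I] using ha)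
    (by simpa only [norm_ofReal_mul_exp_mul_I] using hb)
  simp only [hterm, tsum_mul_right, ← Complex.ofReal_tsum, hsin,
    tsum_ofReal_mul_exp_mul_I ha fun k : ℤ => k * x,
    tsum_ofReal_mul_exp_mul_I hb fun k : ℤ => k * x] at hconv
  simpa only [Complex.mul_re, Complex.ofReal_re, Complex.ofReal_im, Complex.exp_ofReal_mul_I_re,
    zero_mul, mul_zero, sub_zero] using Complex.hasSum_re hconv

section ModeWeight

/-- The weight against which Fourier coefficients are measured. The exponential makes the functions
with finite weighted norm analytic; the factor `(1 + k²)⁻¹` makes their space an algebra. -/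
def modeWeight (k : ℤ) : ℝ := exp (-|(k : ℝ)|) * (1 + (k : ℝ) ^ 2)⁻¹

theorem modeWeight_pos (k : ℤ) : 0 < modeWeight k := by
  unfold modeWeight
  positivity

theorem modeWeight_neg (k : ℤ) : modeWeight (-k) = modeWeight k := by
  simp [modeWeight]

theorem modeWeight_natAbs (k : ℤ) : modeWeight k.natAbs = modeWeight k := by
  rcases Int.natAbs_eq k with h | h <;> rw [h] <;> simp [modeWeight_neg]

theorem summable_pow_abs_mul_modeWeight (n : ℕ) :
    Summable fun k : ℤ => |(k : ℝ)| ^ n * modeWeight k := by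
  have hnat : Summable fun k : ℕ => |((k : ℤ) : ℝ)| ^ n * modeWeight k := by
    refine .of_nonneg_of_le (fun k => mul_nonneg (by positivity) (modeWeight_pos _).le)
      (fun k => ?_) (summable_pow_mul_exp_neg_nat_mul n one_pos)
    simp only [modeWeight, Int.cast_natCast, Nat.abs_cast, neg_one_mul]
    gcongr
    exact mul_le_of_le_one_right (exp_pos _).le
      (inv_le_one_of_one_le₀ (le_add_of_nonneg_right (sq_nonneg _)))
  exact hnat.of_nat_of_neg (by simpa [modeWeight_neg] using hnat)

theorem summable_modeWeight : Summable modeWeight := by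
  simpa using summable_pow_abs_mul_modeWeight 0

theorem summable_inv_one_add_int_sq : Summable fun k : ℤ => (1 + (k : ℝ) ^ 2)⁻¹ := by
  refine .of_norm_bounded_eventually (summable_one_div_int_pow.2 one_lt_two) ?_
  filter_upwards [(finite_singleton (0 : ℤ)).compl_mem_cofinite] with k hk
  have : (0 : ℝ) < (k : ℝ) ^ 2 := by
    have : (k : ℝ) ≠ 0 := Int.cast_ne_zero.2 hk
    positivity
  rw [norm_of_nonneg (by positivity), one_div]
  gcongr
  linarith

theorem inv_one_add_sq_mul_inv_one_add_sq_le (a b : ℝ) :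
    (1 + a ^ 2)⁻¹ * (1 + b ^ 2)⁻¹ ≤
      (1 + (a + b) ^ 2)⁻¹ * (2 * ((1 + a ^ 2)⁻¹ + (1 + b ^ 2)⁻¹)) := by
  have hsq : 1 + (a + b) ^ 2 ≤ 2 * ((1 + a ^ 2) + (1 + b ^ 2)) := by
    nlinarith [sq_nonneg (a - b)]
  have hsum : (1 + a ^ 2)⁻¹ + (1 + b ^ 2)⁻¹ =
      ((1 + a ^ 2) + (1 + b ^ 2)) * ((1 + a ^ 2)⁻¹ * (1 + b ^ 2)⁻¹) := by
    field_simp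
    ring
  rw [hsum, ← mul_assoc 2, ← mul_assoc]
  refine le_mul_of_one_le_left (by positivity) ?_
  rwa [← div_eq_inv_mul, one_le_div (by positivity)]

theorem modeWeight_mul_modeWeight_le (j k : ℤ) :
    modeWeight j * modeWeight k ≤
      modeWeight (j + k) * (2 * ((1 + (j : ℝ) ^ 2)⁻¹ + (1 + (k : ℝ) ^ 2)⁻¹)) := by
  have hexp : exp (-|(j : ℝ)|) * exp (-|(k : ℝ)|) ≤ exp (-|(j + k : ℝ)|) := by
    rw [← exp_add, exp_le_exp]
    linarith [abs_add_le (j : ℝ) k]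
  simp only [modeWeight, Int.cast_add]
  rw [mul_mul_mul_comm, mul_assoc (exp (-|(j + k : ℝ)|))]
  exact mul_le_mul hexp (inv_one_add_sq_mul_inv_one_add_sq_le _ _) (by positivity) (exp_pos _).le

/-- The constant for which the convolution of `modeWeight` with itself is at most
`modeWeightConst * modeWeight`. -/
def modeWeightConst : ℝ := 4 * ∑' k : ℤ, (1 + (k : ℝ) ^ 2)⁻¹

theorem modeWeightConst_nonneg : 0 ≤ modeWeightConst := by
  unfold modeWeightConst
  positivity

theorem exists_hasSum_modeWeight_convolution (n : ℤ) :
    ∃ S ≤ modeWeightConst * modeWeight n,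
      HasSum (fun j => modeWeight j * modeWeight (n - j)) S := by
  have hleft := summable_inv_one_add_int_sq.hasSum
  have hright := (Equiv.subLeft n).hasSum_iff.2 hleft
  have hmajorant := ((hleft.add hright).mul_left 2).mul_left (modeWeight n)
  have hle (j : ℤ) := modeWeight_mul_modeWeight_le j (n - j)
  simp only [add_sub_cancel] at hle
  have hsum : Summable fun j => modeWeight j * modeWeight (n - j) :=
    .of_nonneg_of_le (fun j => (mul_pos (modeWeight_pos _) (modeWeight_pos _)).le) hle
      hmajorant.summable
  refine ⟨_, (hasSum_le hle hsum.hasSum hmajorant).trans_eq ?_, hsum.hasSum⟩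
  rw [modeWeightConst]
  ring

end ModeWeight

/-- Time-dependent Fourier coefficients `c k t` that decay faster than every power of `k`,
uniformly in time; this is what term-by-term differentiation of their cosine series needs. -/
structure RapidDecay (c : ℤ → ℝ → ℝ) : Prop where
  continuous (k : ℤ) : Continuous (c k)
  exists_bound (j : ℕ) : ∃ v : ℤ → ℝ, Summable v ∧ ∀ (k : ℤ) t, |(k : ℝ) ^ j * c k t| ≤ v k

/-- The coefficient family `c k t = k`, by which `∂_x` multiplies up to a phase shift. -/
def freq (k : ℤ) (_ : ℝ) : ℝ := k

/-- The `j`-th `x`-derivative of the series `∑ k, c k t * cos (k * x + θ)` at `p = (t, x)`. The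
phase `θ` is `0` for cosine series and `-(π / 2)` for sine series. -/
def cosSeriesDeriv (θ : ℝ) (j : ℕ) (c : ℤ → ℝ → ℝ) (p : ℝ × ℝ) : ℝ :=
  ∑' k : ℤ, (k : ℝ) ^ j * c k p.1 * cos (k * p.2 + θ + j * (π / 2))

local notation "sinSeriesDeriv" => cosSeriesDeriv (-(π / 2))

section CosSeries

theorem cosSeriesDeriv_freq_pow_mul (θ : ℝ) (j m : ℕ) (c : ℤ → ℝ → ℝ) :
    cosSeriesDeriv θ j (freq ^ m * c) = cosSeriesDeriv (θ - m * (π / 2)) (j + m) c := by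
  funext p
  simp only [cosSeriesDeriv, freq, Pi.mul_apply, Pi.pow_apply]
  refine tsum_congr fun k => ?_
  rw [show (k : ℝ) * p.2 + (θ - m * (π / 2)) + (j + m : ℕ) * (π / 2) =
    k * p.2 + θ + j * (π / 2) by push_cast; ring]
  ring

theorem sinSeriesDeriv_one_div_freq {c : ℤ → ℝ → ℝ} (hc : c 0 = 0) :
    sinSeriesDeriv 1 (c / freq) = cosSeriesDeriv 0 0 c := by
  have hcancel : freq ^ 1 * (c / freq) = c := by
    funext k t
    rcases eq_or_ne k 0 with rfl | hk
    · simp [freq, hc]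
    · simp [freq, mul_div_cancel₀ _ (Int.cast_ne_zero.2 hk : (k : ℝ) ≠ 0)]
  conv_rhs => rw [← hcancel, cosSeriesDeriv_freq_pow_mul]
  simp

theorem cosSeriesDeriv_sub_pi (θ : ℝ) (j : ℕ) (c : ℤ → ℝ → ℝ) :
    cosSeriesDeriv (θ - π) j c = -cosSeriesDeriv θ j c := by
  funext p
  simp only [cosSeriesDeriv, Pi.neg_apply, ← tsum_neg]
  refine tsum_congr fun k => ?_
  rw [← mul_neg, ← cos_sub_pi]
  ring_nf

theorem cosSeriesDeriv_smul (θ : ℝ) (j : ℕ) (a : ℝ) (c : ℤ → ℝ → ℝ) :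
    cosSeriesDeriv θ j (a • c) = a • cosSeriesDeriv θ j c := by
  funext p
  simp only [cosSeriesDeriv, Pi.smul_apply, smul_eq_mul, ← tsum_mul_left]
  exact tsum_congr fun k => by ring

theorem cosSeriesDeriv_zero_zero (c : ℤ → ℝ → ℝ) (p : ℝ × ℝ) :
    cosSeriesDeriv 0 0 c p = ∑' k : ℤ, c k p.1 * cos (k * p.2) := by
  simp [cosSeriesDeriv]

theorem cosSeriesDeriv_periodic (θ : ℝ) (j : ℕ) (c : ℤ → ℝ → ℝ) (t : ℝ) :
    Function.Periodic (fun x => cosSeriesDeriv θ j c (t, x)) (2 * π) := fun x =>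
  tsum_congr fun k => by
    rw [← cos_add_int_mul_two_pi (k * x + θ + j * (π / 2)) k]
    ring_nf

theorem sinSeriesDeriv_odd (c : ℤ → ℝ → ℝ) (t : ℝ) :
    Function.Odd fun x => sinSeriesDeriv 0 c (t, x) := fun x => by
  simp [cosSeriesDeriv, ← sub_eq_add_neg, cos_sub_pi_div_two, tsum_neg]

namespace RapidDecay

variable {c d : ℤ → ℝ → ℝ}

theorem freq_pow_mul (hc : RapidDecay c) (m : ℕ) : RapidDecay (freq ^ m * c) where
  continuous k := (continuous_const (y := (k : ℝ) ^ m)).mul (hc.continuous k)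
  exists_bound j := by
    obtain ⟨v, hv, hcv⟩ := hc.exists_bound (j + m)
    refine ⟨v, hv, fun k t => ?_⟩
    simpa only [freq, Pi.mul_apply, Pi.pow_apply, pow_add, mul_assoc] using hcv k t

theorem div_freq (hc : RapidDecay c) : RapidDecay (c / freq) where
  continuous k := (hc.continuous k).div_const k
  exists_bound j := by
    obtain ⟨v, hv, hcv⟩ := hc.exists_bound j
    refine ⟨v, hv, fun k t => le_trans ?_ (hcv k t)⟩
    simp only [Pi.div_apply, freq, ← mul_div_assoc, abs_div]
    rcases eq_or_ne k 0 with rfl | hk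
    · rw [Int.cast_zero, abs_zero, div_zero]
      exact abs_nonneg _
    · exact div_le_self (abs_nonneg _) (by exact_mod_cast Int.one_le_abs hk)

theorem sub (hc : RapidDecay c) (hd : RapidDecay d) : RapidDecay (c - d) where
  continuous k := (hc.continuous k).sub (hd.continuous k)
  exists_bound j := by
    obtain ⟨v, hv, hcv⟩ := hc.exists_bound j
    obtain ⟨w, hw, hdw⟩ := hd.exists_bound j
    refine ⟨v + w, hv.add hw, fun k t => ?_⟩
    simp only [Pi.sub_apply, mul_sub]
    exact (abs_sub _ _).trans (add_le_add (hcv k t) (hdw k t))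

theorem const_smul (hc : RapidDecay c) (a : ℝ) : RapidDecay (a • c) where
  continuous k := (hc.continuous k).const_smul a
  exists_bound j := by
    obtain ⟨v, hv, hcv⟩ := hc.exists_bound j
    refine ⟨fun k => |a| * v k, hv.mul_left _, fun k t => ?_⟩
    rw [Pi.smul_apply, Pi.smul_apply, smul_eq_mul, mul_left_comm, abs_mul]
    exact mul_le_mul_of_nonneg_left (hcv k t) (abs_nonneg a)

theorem exists_term_bound (hc : RapidDecay c) (j : ℕ) :
    ∃ v : ℤ → ℝ, Summable v ∧ ∀ (k : ℤ) t x, ‖(k : ℝ) ^ j * c k t * cos x‖ ≤ v k := by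
  obtain ⟨v, hv, hcv⟩ := hc.exists_bound j
  refine ⟨v, hv, fun k t x => ?_⟩
  rw [norm_mul]
  exact (mul_le_of_le_one_right (norm_nonneg _) (abs_cos_le_one _)).trans (hcv k t)

theorem summable_term (hc : RapidDecay c) (j : ℕ) (t : ℝ) (x : ℤ → ℝ) :
    Summable fun k : ℤ => (k : ℝ) ^ j * c k t * cos (x k) :=
  let ⟨_, hv, hcv⟩ := hc.exists_term_bound j
  .of_norm_bounded hv fun k => hcv k t (x k)

theorem continuous_cosSeriesDeriv (hc : RapidDecay c) (θ : ℝ) (j : ℕ) :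
    Continuous (cosSeriesDeriv θ j c) := by
  obtain ⟨v, hv, hcv⟩ := hc.exists_term_bound j
  refine continuous_tsum (fun k => ?_) hv fun k p => hcv k _ _
  have := hc.continuous k
  fun_prop

theorem cosSeriesDeriv_sub (hc : RapidDecay c) (hd : RapidDecay d) (θ : ℝ) (j : ℕ) :
    cosSeriesDeriv θ j (c - d) = cosSeriesDeriv θ j c - cosSeriesDeriv θ j d := by
  funext p
  simp only [cosSeriesDeriv, Pi.sub_apply, mul_sub, sub_mul]
  exact (hc.summable_term j _ _).tsum_sub (hd.summable_term j _ _)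

theorem hasDerivAt_cosSeriesDeriv_space (hc : RapidDecay c) (θ : ℝ) (j : ℕ) (t x : ℝ) :
    HasDerivAt (fun y => cosSeriesDeriv θ j c (t, y)) (cosSeriesDeriv θ (j + 1) c (t, x)) x := by
  obtain ⟨v, hv, hcv⟩ := hc.exists_term_bound (j + 1)
  have hterm (k : ℤ) (y : ℝ) :
      HasDerivAt (fun y => (k : ℝ) ^ j * c k t * cos (k * y + θ + j * (π / 2)))
        ((k : ℝ) ^ (j + 1) * c k t * cos (k * y + θ + (j + 1 : ℕ) * (π / 2))) y := by
    have harg : HasDerivAt (fun y : ℝ => k * y + θ + j * (π / 2)) k y := by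
      simpa using (((hasDerivAt_id y).const_mul (k : ℝ)).add_const θ).add_const (j * (π / 2))
    refine (harg.cos.const_mul ((k : ℝ) ^ j * c k t)).congr_deriv ?_
    rw [Nat.cast_add_one, add_one_mul, ← add_assoc, cos_add_pi_div_two]
    ring
  exact hasDerivAt_tsum (y₀ := x) hv hterm (fun k y => hcv k t _) (hc.summable_term j t _) x

theorem hasDerivAt_cosSeriesDeriv_time (hc : RapidDecay c) (hd : RapidDecay d) {I : Set ℝ}
    (hI : IsOpen I) (hI' : IsPreconnected I) (hcd : ∀ k, ∀ t ∈ I, HasDerivAt (c k) (d k t) t)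
    (θ : ℝ) (j : ℕ) {t : ℝ} (ht : t ∈ I) (x : ℝ) :
    HasDerivAt (fun s => cosSeriesDeriv θ j c (s, x)) (cosSeriesDeriv θ j d (t, x)) t := by
  obtain ⟨v, hv, hdv⟩ := hd.exists_term_bound j
  simp only [cosSeriesDeriv]
  exact hasDerivAt_tsum_of_isPreconnected hv hI hI'
    (fun k s hs => ((hcd k s hs).const_mul _).mul_const _) (fun k s _ => hdv k s _) ht
    (hc.summable_term j t _) ht

theorem iteratedDeriv_cosSeriesDeriv (hc : RapidDecay c) (θ : ℝ) (n j : ℕ) (t : ℝ) :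
    iteratedDeriv n (fun x => cosSeriesDeriv θ j c (t, x)) =
      fun x => cosSeriesDeriv θ (j + n) c (t, x) := by
  induction n with
  | zero => simp
  | succ n ih =>
    rw [iteratedDeriv_succ, ih]
    exact funext fun x => (hc.hasDerivAt_cosSeriesDeriv_space θ (j + n) t x).deriv

end RapidDecay

end CosSeries

/-- `h` solves `∂_t h = a * ∂_x((∂_x h)³ - ∂_x h) - ν * ∂_x⁴ h` on `I × ℝ`, with one-sided time
derivatives at the endpoints that belong to `I`. -/
def SolvesThinFilm (a ν : ℝ) (I : Set ℝ) (h : ℝ → ℝ → ℝ) : Prop :=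
  ∀ x, ∀ t ∈ I, HasDerivWithinAt (fun s => h s x)
    (a * deriv (fun y => deriv (h t) y ^ 3 - deriv (h t) y) x - ν * iteratedDeriv 4 (h t) x) I t

section Spectral

variable {ε : ℝ} {s q : ℤ → ℝ → ℝ}

/-- The time derivative of the sine coefficients `s` of a solution `h` of the thin-film equation
with `a = ε`, `ν = 1`, when `q` are the cosine coefficients of `(∂_x h)³`. -/
def spectralRate (ε : ℝ) (s q : ℤ → ℝ → ℝ) : ℤ → ℝ → ℝ :=
  ε • (freq ^ 2 * s - freq * q) - freq ^ 4 * s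

theorem RapidDecay.spectralRate (hs : RapidDecay s) (hq : RapidDecay q) (ε : ℝ) :
    RapidDecay (spectralRate ε s q) :=
  (((hs.freq_pow_mul 2).sub (pow_one freq ▸ hq.freq_pow_mul 1)).const_smul ε).sub
    (hs.freq_pow_mul 4)

theorem sinSeriesDeriv_spectralRate (hs : RapidDecay s) (hq : RapidDecay q) (j : ℕ) :
    sinSeriesDeriv j (spectralRate ε s q) =
      ε • (cosSeriesDeriv 0 (j + 1) q - sinSeriesDeriv (j + 2) s) - sinSeriesDeriv (j + 4) s := by
  have hq₁ : RapidDecay (freq * q) := by simpa only [pow_one] using hq.freq_pow_mul 1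
  have h₁ : sinSeriesDeriv j (freq * q) = -cosSeriesDeriv 0 (j + 1) q := by
    rw [← pow_one freq, cosSeriesDeriv_freq_pow_mul, ← cosSeriesDeriv_sub_pi]
    congr 1
    push_cast
    ring
  have h₂ : sinSeriesDeriv j (freq ^ 2 * s) = -sinSeriesDeriv (j + 2) s := by
    rw [cosSeriesDeriv_freq_pow_mul, ← cosSeriesDeriv_sub_pi]
    congr 1
    push_cast
    ring
  have h₄ : sinSeriesDeriv j (freq ^ 4 * s) = sinSeriesDeriv (j + 4) s := by
    rw [cosSeriesDeriv_freq_pow_mul, ← neg_neg (sinSeriesDeriv _ s), ← cosSeriesDeriv_sub_pi,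
      ← cosSeriesDeriv_sub_pi]
    congr 1
    push_cast
    ring
  rw [spectralRate, (((hs.freq_pow_mul 2).sub hq₁).const_smul ε).cosSeriesDeriv_sub
    (hs.freq_pow_mul 4), cosSeriesDeriv_smul, (hs.freq_pow_mul 2).cosSeriesDeriv_sub hq₁, h₁, h₂,
    h₄, neg_sub_neg]

/-- `s k t` are the sine coefficients, for positive time, of a solution `h` of the thin-film
equation with `a = ε` and `ν = 1`, and `q k t` are the cosine coefficients of `(∂_x h)³`. -/
structure IsSpectralSolution (ε : ℝ) (s q : ℤ → ℝ → ℝ) : Prop where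
  rapidDecay : RapidDecay s
  rapidDecay_cube : RapidDecay q
  cube_eq : cosSeriesDeriv 0 0 q = sinSeriesDeriv 1 s ^ 3
  hasDerivAt : ∀ k, ∀ t ∈ Ioi (0 : ℝ), HasDerivAt (s k) (spectralRate ε s q k t) t

/-- The algebra of functions of `(t, x)` generated by all `x`-derivatives of the sine series with
coefficients `s`. For a spectral solution it is closed under `∂_x` and, through the equation, under
`∂_t`. -/
def spatialDerivAlgebra (s : ℤ → ℝ → ℝ) : Subalgebra ℝ (ℝ × ℝ → ℝ) :=
  Algebra.adjoin ℝ (range fun j => sinSeriesDeriv j s)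

theorem sinSeriesDeriv_mem_spatialDerivAlgebra (s : ℤ → ℝ → ℝ) (j : ℕ) :
    sinSeriesDeriv j s ∈ spatialDerivAlgebra s :=
  Algebra.subset_adjoin (mem_range_self j)

theorem RapidDecay.continuous_of_mem_spatialDerivAlgebra (hs : RapidDecay s) {f : ℝ × ℝ → ℝ}
    (hf : f ∈ spatialDerivAlgebra s) : Continuous f := by
  induction hf using Algebra.adjoin_induction with
  | mem f hf =>
    obtain ⟨j, rfl⟩ := hf
    exact hs.continuous_cosSeriesDeriv _ j
  | algebraMap r => exact continuous_const
  | add f g _ _ hf hg => exact hf.add hg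
  | mul f g _ _ hf hg => exact hf.mul hg

theorem RapidDecay.exists_space_deriv_mem_spatialDerivAlgebra (hs : RapidDecay s) {f : ℝ × ℝ → ℝ}
    (hf : f ∈ spatialDerivAlgebra s) :
    ∃ fx ∈ spatialDerivAlgebra s, ∀ p, HasDerivAt (fun y => f (p.1, y)) (fx p) p.2 := by
  obtain ⟨fx, fx_mem, hfx⟩ := exists_hasDerivAt_mem_adjoin (Ω := univ) (fun p y => (p.1, y))
    Prod.snd (fun _ => rfl) (forall_mem_range.2 fun j => ⟨_,
      sinSeriesDeriv_mem_spatialDerivAlgebra s (j + 1),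
      fun p _ => hs.hasDerivAt_cosSeriesDeriv_space _ j p.1 p.2⟩) hf
  exact ⟨fx, fx_mem, fun p => hfx p (mem_univ p)⟩

namespace IsSpectralSolution

theorem cosSeriesDeriv_cube_mem (h : IsSpectralSolution ε s q) (j : ℕ) :
    cosSeriesDeriv 0 j q ∈ spatialDerivAlgebra s := by
  induction j with
  | zero =>
    rw [h.cube_eq]
    exact pow_mem (sinSeriesDeriv_mem_spatialDerivAlgebra s 1) 3
  | succ j ih =>
    obtain ⟨fx, fx_mem, hfx⟩ := h.rapidDecay.exists_space_deriv_mem_spatialDerivAlgebra ih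
    have heq : cosSeriesDeriv 0 (j + 1) q = fx := funext fun p =>
      (h.rapidDecay_cube.hasDerivAt_cosSeriesDeriv_space 0 j p.1 p.2).unique (hfx p)
    exact heq ▸ fx_mem

theorem hasDerivAt_time (h : IsSpectralSolution ε s q) (j : ℕ) {t : ℝ} (ht : 0 < t) (x : ℝ) :
    HasDerivAt (fun r => sinSeriesDeriv j s (r, x))
      (ε * (cosSeriesDeriv 0 (j + 1) q (t, x) - sinSeriesDeriv (j + 2) s (t, x)) -
        sinSeriesDeriv (j + 4) s (t, x)) t := by
  have hderiv := h.rapidDecay.hasDerivAt_cosSeriesDeriv_time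
    (h.rapidDecay.spectralRate h.rapidDecay_cube ε) isOpen_Ioi isPreconnected_Ioi h.hasDerivAt
    (-(π / 2)) j ht x
  rwa [sinSeriesDeriv_spectralRate h.rapidDecay h.rapidDecay_cube] at hderiv

theorem exists_time_deriv_mem (h : IsSpectralSolution ε s q) {f : ℝ × ℝ → ℝ}
    (hf : f ∈ spatialDerivAlgebra s) : ∃ ft ∈ spatialDerivAlgebra s,
      ∀ p ∈ Ioi (0 : ℝ) ×ˢ univ, HasDerivAt (fun r => f (r, p.2)) (ft p) p.1 :=
  have mem (j : ℕ) := sinSeriesDeriv_mem_spatialDerivAlgebra s j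
  exists_hasDerivAt_mem_adjoin (fun p r => (r, p.2)) Prod.fst (fun _ => rfl)
    (forall_mem_range.2 fun j => ⟨
      ε • (cosSeriesDeriv 0 (j + 1) q - sinSeriesDeriv (j + 2) s) - sinSeriesDeriv (j + 4) s,
      sub_mem (Subalgebra.smul_mem _ (sub_mem (h.cosSeriesDeriv_cube_mem (j + 1)) (mem (j + 2))) ε)
        (mem (j + 4)),
      fun p hp => h.hasDerivAt_time j hp.1 p.2⟩) hf

theorem contDiffOn (h : IsSpectralSolution ε s q) :
    ContDiffOn ℝ ∞ (sinSeriesDeriv 0 s) (Ioi (0 : ℝ) ×ˢ univ) :=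
  contDiffOn_infty_of_partial_mem (isOpen_Ioi.prod isOpen_univ)
    (A := (spatialDerivAlgebra s : Set (ℝ × ℝ → ℝ)))
    (fun _ hf => (h.rapidDecay.continuous_of_mem_spatialDerivAlgebra hf).continuousOn)
    (fun _ hf => h.exists_time_deriv_mem hf)
    (fun _ hf =>
      let ⟨fx, fx_mem, hfx⟩ := h.rapidDecay.exists_space_deriv_mem_spatialDerivAlgebra hf
      ⟨fx, fx_mem, fun p _ => hfx p⟩)
    _ (sinSeriesDeriv_mem_spatialDerivAlgebra s 0)

theorem deriv_space (h : IsSpectralSolution ε s q) (t : ℝ) :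
    deriv (fun x => sinSeriesDeriv 0 s (t, x)) = fun x => sinSeriesDeriv 1 s (t, x) :=
  funext fun x => (h.rapidDecay.hasDerivAt_cosSeriesDeriv_space _ 0 t x).deriv

theorem solvesThinFilm (h : IsSpectralSolution ε s q) :
    SolvesThinFilm ε 1 (Ioi 0) fun t x => sinSeriesDeriv 0 s (t, x) := by
  intro x t ht
  have hflux : deriv (fun y => sinSeriesDeriv 1 s (t, y) ^ 3 - sinSeriesDeriv 1 s (t, y)) x =
      cosSeriesDeriv 0 1 q (t, x) - sinSeriesDeriv 2 s (t, x) := by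
    have hcube (y : ℝ) : sinSeriesDeriv 1 s (t, y) ^ 3 = cosSeriesDeriv 0 0 q (t, y) :=
      (congrFun h.cube_eq (t, y)).symm
    simp only [hcube]
    exact ((h.rapidDecay_cube.hasDerivAt_cosSeriesDeriv_space 0 0 t x).sub
      (h.rapidDecay.hasDerivAt_cosSeriesDeriv_space _ 1 t x)).deriv
  rw [h.deriv_space, hflux, h.rapidDecay.iteratedDeriv_cosSeriesDeriv, one_mul]
  exact (h.hasDerivAt_time 0 ht x).hasDerivWithinAt

end IsSpectralSolution

end Spectral

section EvenModes

/-- Fourier coefficients of even functions of `x`, depending boundedly and continuously on time and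
divided by `modeWeight`. Only nonnegative frequencies are stored; see `coeff`. -/
abbrev EvenModes := ℕ × ℝ →ᵇ ℝ

/-- The Fourier coefficient at frequency `k` and time `t` encoded by `b`. -/
def coeff (b : EvenModes) (k : ℤ) (t : ℝ) : ℝ := modeWeight k * b (k.natAbs, t)

theorem coeff_even (b : EvenModes) (t : ℝ) : Function.Even fun k => coeff b k t := fun k => by
  simp only [coeff, modeWeight_neg, Int.natAbs_neg]

theorem norm_coeff_le (b : EvenModes) (k : ℤ) (t : ℝ) : ‖coeff b k t‖ ≤ ‖b‖ * modeWeight k := by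
  rw [coeff, norm_mul, norm_of_nonneg (modeWeight_pos k).le, mul_comm]
  exact mul_le_mul_of_nonneg_right (b.norm_coe_le_norm _) (modeWeight_pos k).le

theorem continuous_coeff (b : EvenModes) (k : ℤ) : Continuous (coeff b k) :=
  continuous_const.mul (b.continuous.comp (Continuous.prodMk_right k.natAbs))

theorem rapidDecay_coeff (b : EvenModes) : RapidDecay (coeff b) where
  continuous := continuous_coeff b
  exists_bound j := by
    refine ⟨fun k => ‖b‖ * (|(k : ℝ)| ^ j * modeWeight k),
      (summable_pow_abs_mul_modeWeight j).mul_left _, fun k t => ?_⟩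
    simp only [abs_mul, abs_pow, mul_left_comm ‖b‖]
    exact mul_le_mul_of_nonneg_left (norm_coeff_le b k t) (by positivity)

theorem summable_norm_coeff (b : EvenModes) (t : ℝ) : Summable fun k => ‖coeff b k t‖ :=
  .of_nonneg_of_le (fun _ => norm_nonneg _) (fun k => norm_coeff_le b k t)
    (summable_modeWeight.mul_left _)

theorem coeff_add (b d : EvenModes) : coeff (b + d) = coeff b + coeff d := by
  funext k t
  simp [coeff, mul_add]

theorem coeff_smul (a : ℝ) (b : EvenModes) : coeff (a • b) = a • coeff b := by
  funext k t
  simp [coeff, mul_left_comm]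

theorem coeff_sub (b d : EvenModes) : coeff (b - d) = coeff b - coeff d := by
  funext k t
  simp [coeff, mul_sub]

/-- The Fourier coefficients of the product of the functions encoded by `b` and `d`. -/
def coeffConvolution (b d : EvenModes) (n : ℤ) (t : ℝ) : ℝ :=
  ∑' j, coeff b j t * coeff d (n - j) t

theorem norm_coeff_mul_coeff_le (b d : EvenModes) (j k : ℤ) (t : ℝ) :
    ‖coeff b j t * coeff d k t‖ ≤ ‖b‖ * ‖d‖ * (modeWeight j * modeWeight k) := by
  rw [norm_mul, mul_mul_mul_comm]
  exact mul_le_mul (norm_coeff_le b j t) (norm_coeff_le d k t) (norm_nonneg _)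
    (mul_nonneg (norm_nonneg b) (modeWeight_pos j).le)

theorem summable_coeff_mul_coeff (b d : EvenModes) (n : ℤ) (t : ℝ) :
    Summable fun j => coeff b j t * coeff d (n - j) t :=
  let ⟨_, _, hS⟩ := exists_hasSum_modeWeight_convolution n
  .of_norm_bounded (hS.summable.mul_left _) fun j => norm_coeff_mul_coeff_le b d j (n - j) t

theorem norm_coeffConvolution_le (b d : EvenModes) (n : ℤ) (t : ℝ) :
    ‖coeffConvolution b d n t‖ ≤ modeWeightConst * ‖b‖ * ‖d‖ * modeWeight n := by
  obtain ⟨S, hS_le, hS⟩ := exists_hasSum_modeWeight_convolution n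
  calc ‖coeffConvolution b d n t‖ ≤ ‖b‖ * ‖d‖ * S :=
        tsum_of_norm_bounded (hS.mul_left _) fun j => norm_coeff_mul_coeff_le b d j (n - j) t
    _ ≤ ‖b‖ * ‖d‖ * (modeWeightConst * modeWeight n) := by gcongr
    _ = _ := by ring

theorem continuous_coeffConvolution (b d : EvenModes) (n : ℤ) :
    Continuous (coeffConvolution b d n) :=
  let ⟨_, _, hS⟩ := exists_hasSum_modeWeight_convolution n
  continuous_tsum (fun j => (continuous_coeff b j).mul (continuous_coeff d (n - j)))
    (hS.summable.mul_left _) fun j t => norm_coeff_mul_coeff_le b d j (n - j) t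

theorem coeffConvolution_even (b d : EvenModes) (t : ℝ) :
    Function.Even fun n => coeffConvolution b d n t := fun n => by
  simp only [coeffConvolution]
  rw [← (Equiv.neg ℤ).tsum_eq]
  refine tsum_congr fun j => ?_
  have hb : coeff b (-j) t = coeff b j t := coeff_even b t j
  have hd : coeff d (-(n - j)) t = coeff d (n - j) t := coeff_even d t (n - j)
  rw [Equiv.neg_apply, hb, neg_sub_neg, ← neg_sub n j, hd]

theorem coeffConvolution_comm (b d : EvenModes) : coeffConvolution b d = coeffConvolution d b := by
  funext n t
  rw [coeffConvolution, ← (Equiv.subLeft n).tsum_eq]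
  simp only [Equiv.subLeft_apply, sub_sub_cancel, mul_comm, coeffConvolution]

theorem coeffConvolution_add_left (b b' d : EvenModes) :
    coeffConvolution (b + b') d = coeffConvolution b d + coeffConvolution b' d := by
  funext n t
  simp only [coeffConvolution, coeff_add, Pi.add_apply, add_mul]
  exact (summable_coeff_mul_coeff b d n t).tsum_add (summable_coeff_mul_coeff b' d n t)

theorem coeffConvolution_smul_left (a : ℝ) (b d : EvenModes) :
    coeffConvolution (a • b) d = a • coeffConvolution b d := by
  funext n t
  simp only [coeffConvolution, coeff_smul, Pi.smul_apply, smul_eq_mul, mul_assoc, tsum_mul_left]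

theorem coeffConvolution_add_right (b d d' : EvenModes) :
    coeffConvolution b (d + d') = coeffConvolution b d + coeffConvolution b d' := by
  simp only [coeffConvolution_comm b, coeffConvolution_add_left]

theorem coeffConvolution_smul_right (a : ℝ) (b d : EvenModes) :
    coeffConvolution b (a • d) = a • coeffConvolution b d := by
  simp only [coeffConvolution_comm b, coeffConvolution_smul_left]

theorem norm_coeffConvolution_div_modeWeight_le (b d : EvenModes) (n : ℤ) (t : ℝ) :
    ‖coeffConvolution b d n t / modeWeight n‖ ≤ modeWeightConst * ‖b‖ * ‖d‖ := by
  rw [norm_div, norm_of_nonneg (modeWeight_pos n).le, div_le_iff₀ (modeWeight_pos n)]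
  exact norm_coeffConvolution_le b d n t

/-- The product of the functions encoded by `b` and `d`, before it is bundled in `modeMul`. -/
def modeMulFun (b d : EvenModes) : EvenModes :=
  .ofNormedAddCommGroup (fun p => coeffConvolution b d p.1 p.2 / modeWeight p.1)
    (continuous_prod_of_discrete_left.2 fun n =>
      (continuous_coeffConvolution b d n).div_const (modeWeight n))
    (modeWeightConst * ‖b‖ * ‖d‖) fun p => norm_coeffConvolution_div_modeWeight_le b d p.1 p.2

theorem norm_modeMulFun_le (b d : EvenModes) :
    ‖modeMulFun b d‖ ≤ modeWeightConst * ‖b‖ * ‖d‖ :=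
  (modeMulFun b d).norm_le
    (mul_nonneg (mul_nonneg modeWeightConst_nonneg (norm_nonneg b)) (norm_nonneg d)) |>.2
    fun p => norm_coeffConvolution_div_modeWeight_le b d p.1 p.2

/-- Pointwise multiplication of the functions encoded by elements of `EvenModes`. -/
def modeMul : EvenModes →L[ℝ] EvenModes →L[ℝ] EvenModes :=
  LinearMap.mkContinuous₂
    (LinearMap.mk₂ ℝ modeMulFun
      (fun b b' d => by ext; simp [modeMulFun, coeffConvolution_add_left, add_div])
      (fun a b d => by ext; simp [modeMulFun, coeffConvolution_smul_left, mul_div_assoc])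
      (fun b d d' => by ext; simp [modeMulFun, coeffConvolution_add_right, add_div])
      (fun a b d => by ext; simp [modeMulFun, coeffConvolution_smul_right, mul_div_assoc]))
    modeWeightConst norm_modeMulFun_le

theorem coeff_modeMul (b d : EvenModes) : coeff (modeMul b d) = coeffConvolution b d := by
  funext k t
  have hnatAbs : coeffConvolution b d k.natAbs t = coeffConvolution b d k t := by
    rcases Int.natAbs_eq k with h | h <;> rw [h]
    · simp
    · simpa using (coeffConvolution_even b d t k.natAbs).symm
  change modeWeight k * (coeffConvolution b d k.natAbs t / modeWeight k.natAbs) = _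
  rw [hnatAbs, modeWeight_natAbs, mul_div_cancel₀ _ (modeWeight_pos k).ne']

theorem cosSeriesDeriv_coeff_modeMul (b d : EvenModes) :
    cosSeriesDeriv 0 0 (coeff (modeMul b d)) =
      cosSeriesDeriv 0 0 (coeff b) * cosSeriesDeriv 0 0 (coeff d) := by
  funext p
  simp only [cosSeriesDeriv_zero_zero, Pi.mul_apply, coeff_modeMul]
  exact (hasSum_convolution_mul_cos (summable_norm_coeff b p.1) (summable_norm_coeff d p.1)
    (coeff_even d p.1) p.2).tsum_eq

theorem norm_cosSeriesDeriv_coeff_le (b : EvenModes) (p : ℝ × ℝ) :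
    ‖cosSeriesDeriv 0 0 (coeff b) p‖ ≤ ‖b‖ * ∑' k, modeWeight k := by
  rw [cosSeriesDeriv_zero_zero]
  refine tsum_of_norm_bounded (summable_modeWeight.hasSum.mul_left _) fun k => ?_
  rw [norm_mul]
  exact (mul_le_of_le_one_right (norm_nonneg _) (abs_cos_le_one _)).trans (norm_coeff_le b k p.1)

end EvenModes

section Duhamel

variable {E : Type*} [NormedAddCommGroup E] [NormedSpace ℝ E]

/-- The solution of `u' = -L u + f` on `[0, ∞)` with `u 0 = 0`, extended by `0` to negative
times so that it is continuous on the whole line. -/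
def duhamel (L : ℝ) (f : ℝ → E) (t : ℝ) : E :=
  exp (-(L * max t 0)) • ∫ s in 0..max t 0, exp (L * s) • f s

variable {f g : ℝ → E}

theorem continuous_duhamel (L : ℝ) (hf : Continuous f) : Continuous (duhamel L f) := by
  have hprimitive : Continuous fun τ => ∫ s in 0..τ, exp (L * s) • f s :=
    intervalIntegral.continuous_primitive
      (fun _ _ => Continuous.intervalIntegrable (by fun_prop) _ _) _
  have hfactor : Continuous fun t => exp (-(L * max t 0)) := by fun_prop
  exact hfactor.smul (hprimitive.comp (continuous_id.max continuous_const))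

theorem hasDerivAt_duhamel [CompleteSpace E] (L : ℝ) (hf : Continuous f) {t : ℝ} (ht : 0 < t) :
    HasDerivAt (duhamel L f) (-L • duhamel L f t + f t) t := by
  have hcont : Continuous fun s => exp (L * s) • f s := by fun_prop
  have hprimitive : HasDerivAt (fun τ => ∫ s in 0..τ, exp (L * s) • f s) (exp (L * t) • f t) t :=
    intervalIntegral.integral_hasDerivAt_right (hcont.intervalIntegrable _ _)
      (hcont.stronglyMeasurableAtFilter _ _) hcont.continuousAt
  have hlinear : HasDerivAt (fun s : ℝ => -(L * s)) (-L) t := by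
    simpa using ((hasDerivAt_id t).const_mul L).fun_neg
  have heq : duhamel L f =ᶠ[𝓝 t] fun τ => exp (-(L * τ)) • ∫ s in 0..τ, exp (L * s) • f s := by
    filter_upwards [Ioi_mem_nhds ht] with τ hτ
    simp only [duhamel, max_eq_left (mem_Ioi.1 hτ).le]
  refine ((hlinear.exp.smul hprimitive).congr_of_eventuallyEq heq).congr_deriv ?_
  rw [heq.eq_of_nhds, smul_smul, ← exp_add, neg_add_cancel, exp_zero, one_smul, smul_smul,
    mul_comm (-L), add_comm]

theorem mul_norm_duhamel_le {L M : ℝ} (hL : 0 ≤ L) (hf : ∀ s, ‖f s‖ ≤ M) (t : ℝ) :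
    L * ‖duhamel L f t‖ ≤ M := by
  have hM : 0 ≤ M := (norm_nonneg _).trans (hf 0)
  have hnorm : ‖∫ s in 0..max t 0, exp (L * s) • f s‖ ≤ ∫ s in 0..max t 0, exp (L * s) * M := by
    refine intervalIntegral.norm_integral_le_of_norm_le (le_max_right t 0)
      (.of_forall fun s _ => ?_) (Continuous.intervalIntegrable (by fun_prop) _ _)
    rw [norm_smul, norm_of_nonneg (exp_pos _).le]
    exact mul_le_mul_of_nonneg_left (hf s) (exp_pos _).le
  have hint : L * ∫ s in 0..max t 0, exp (L * s) = exp (L * max t 0) - 1 := by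
    rw [← intervalIntegral.integral_const_mul]
    rw [intervalIntegral.integral_eq_sub_of_hasDerivAt (f := fun s => exp (L * s))
      (fun s _ => by simpa [mul_comm] using ((hasDerivAt_id s).const_mul L).exp)
      (Continuous.intervalIntegrable (by fun_prop) _ _), mul_zero, exp_zero]
  calc L * ‖duhamel L f t‖
      ≤ L * (exp (-(L * max t 0)) * ((∫ s in 0..max t 0, exp (L * s)) * M)) := by
        rw [duhamel, norm_smul, norm_of_nonneg (exp_pos _).le,
          ← intervalIntegral.integral_mul_const]
        gcongr
    _ = (1 - exp (-(L * max t 0))) * M := by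
        rw [mul_left_comm, ← mul_assoc L, hint, ← mul_assoc, mul_sub, ← exp_add, neg_add_cancel,
          exp_zero, mul_one]
    _ ≤ M := mul_le_of_le_one_left hM (sub_le_self _ (exp_pos _).le)

theorem duhamel_add (L : ℝ) (hf : Continuous f) (hg : Continuous g) :
    duhamel L (f + g) = duhamel L f + duhamel L g := by
  funext t
  simp only [duhamel, Pi.add_apply, smul_add]
  rw [intervalIntegral.integral_add (Continuous.intervalIntegrable (by fun_prop) _ _)
    (Continuous.intervalIntegrable (by fun_prop) _ _), smul_add]

theorem duhamel_smul (L a : ℝ) (f : ℝ → E) : duhamel L (a • f) = a • duhamel L f := by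
  funext t
  simp only [duhamel, Pi.smul_apply, smul_comm _ a, intervalIntegral.integral_smul]

end Duhamel

section FixedPoint

theorem continuous_mode (b : EvenModes) (n : ℕ) : Continuous fun t => b (n, t) :=
  b.continuous.comp (Continuous.prodMk_right n)

theorem norm_sq_mul_duhamel_le (b : EvenModes) (n : ℕ) (t : ℝ) :
    ‖-(n : ℝ) ^ 2 * duhamel ((n : ℝ) ^ 4) (fun s => b (n, s)) t‖ ≤ ‖b‖ := by
  have hpow : (n : ℝ) ^ 2 ≤ (n : ℝ) ^ 4 := by
    rcases n.eq_zero_or_pos with rfl | hn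
    · simp
    · exact pow_le_pow_right₀ (Nat.one_le_cast.2 hn) (by norm_num)
  rw [norm_mul, norm_neg, norm_of_nonneg (by positivity)]
  exact (mul_le_mul_of_nonneg_right hpow (norm_nonneg _)).trans
    (mul_norm_duhamel_le (by positivity) (fun s => b.norm_coe_le_norm _) t)

/-- The solution operator of `∂_t u = ∂_x² g - ∂_x⁴ u` with zero initial value, acting on the
cosine coefficients of `g`, before it is bundled in `modeDuhamel`. -/
def modeDuhamelFun (g : EvenModes) : EvenModes :=
  .ofNormedAddCommGroup
    (fun p => -(p.1 : ℝ) ^ 2 * duhamel ((p.1 : ℝ) ^ 4) (fun s => g (p.1, s)) p.2)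
    (continuous_prod_of_discrete_left.2 fun n =>
      (continuous_duhamel ((n : ℝ) ^ 4) (continuous_mode g n)).const_mul (-(n : ℝ) ^ 2))
    ‖g‖ fun p => norm_sq_mul_duhamel_le g p.1 p.2

theorem norm_modeDuhamelFun_le (g : EvenModes) : ‖modeDuhamelFun g‖ ≤ 1 * ‖g‖ := by
  rw [one_mul]
  exact ((modeDuhamelFun g).norm_le (norm_nonneg g)).2 fun p => norm_sq_mul_duhamel_le g p.1 p.2

/-- The solution operator of `∂_t u = ∂_x² g - ∂_x⁴ u` with zero initial value, acting on the
cosine coefficients of `g`. -/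
def modeDuhamel : EvenModes →L[ℝ] EvenModes :=
  LinearMap.mkContinuous
    { toFun := modeDuhamelFun
      map_add' := fun f g => by
        ext p
        have := duhamel_add ((p.1 : ℝ) ^ 4) (continuous_mode f p.1) (continuous_mode g p.1)
        have := congrFun this p.2
        simp only [Pi.add_def] at this
        simp [modeDuhamelFun, this, mul_add, add_comm]
      map_smul' := fun a f => by
        ext p
        have := congrFun (duhamel_smul ((p.1 : ℝ) ^ 4) a fun s => f (p.1, s)) p.2
        simp only [Pi.smul_def, smul_eq_mul] at this
        simp [modeDuhamelFun, this, mul_left_comm] }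
    1 norm_modeDuhamelFun_le

theorem modeDuhamel_apply (g : EvenModes) (n : ℕ) (t : ℝ) :
    modeDuhamel g (n, t) = -(n : ℝ) ^ 2 * duhamel ((n : ℝ) ^ 4) (fun s => g (n, s)) t := rfl

/-- The solution of `∂_t u = -∂_x⁴ u` whose initial cosine coefficients, divided by `modeWeight`,
are `y`, extended as a constant to negative times. -/
def linearFlow (y : ℕ →ᵇ ℝ) : EvenModes :=
  .ofNormedAddCommGroup (fun p => y p.1 * exp (-((p.1 : ℝ) ^ 4 * max p.2 0)))
    (continuous_prod_of_discrete_left.2 fun n => by fun_prop) ‖y‖ fun p => by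
      have hdecay : exp (-((p.1 : ℝ) ^ 4 * max p.2 0)) ≤ 1 :=
        exp_le_one_iff.2 (neg_nonpos.2 (by positivity))
      rw [norm_mul, norm_of_nonneg (exp_pos _).le]
      exact (mul_le_of_le_one_right (norm_nonneg _) hdecay).trans (y.norm_coe_le_norm p.1)

theorem linearFlow_apply (y : ℕ →ᵇ ℝ) (n : ℕ) (t : ℝ) :
    linearFlow y (n, t) = y n * exp (-((n : ℝ) ^ 4 * max t 0)) := rfl

/-- The cosine coefficients of `u³ - u`, where `u` is the function encoded by `b`. -/
def slopeFlux (b : EvenModes) : EvenModes := modeMul b (modeMul b b) - b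

theorem contDiff_slopeFlux : ContDiff ℝ 1 slopeFlux := by
  unfold slopeFlux
  fun_prop

theorem hasDerivAt_linearFlow_add_modeDuhamel (y : ℕ →ᵇ ℝ) (ε : ℝ) (g : EvenModes) (n : ℕ) {t : ℝ}
    (ht : 0 < t) : HasDerivAt (fun r => (linearFlow y + ε • modeDuhamel g) (n, r))
      (-(n : ℝ) ^ 4 * (linearFlow y + ε • modeDuhamel g) (n, t) -
        ε * ((n : ℝ) ^ 2 * g (n, t))) t := by
  have hflow : HasDerivAt (fun r => linearFlow y (n, r))
      (-(n : ℝ) ^ 4 * linearFlow y (n, t)) t := by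
    have hexp : HasDerivAt (fun r => y n * exp (-((n : ℝ) ^ 4 * r)))
        (y n * (exp (-((n : ℝ) ^ 4 * t)) * -(n : ℝ) ^ 4)) t := by
      simpa using (((hasDerivAt_id t).const_mul ((n : ℝ) ^ 4)).fun_neg.exp).const_mul (y n)
    have heq : (fun r => linearFlow y (n, r)) =ᶠ[𝓝 t] fun r => y n * exp (-((n : ℝ) ^ 4 * r)) := by
      filter_upwards [Ioi_mem_nhds ht] with r hr
      rw [linearFlow_apply, max_eq_left (mem_Ioi.1 hr).le]
    refine (hexp.congr_of_eventuallyEq heq).congr_deriv ?_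
    rw [linearFlow_apply, max_eq_left ht.le]
    ring
  have hduhamel := ((hasDerivAt_duhamel ((n : ℝ) ^ 4) (continuous_mode g n) ht).const_mul
    (-(n : ℝ) ^ 2)).const_mul ε
  refine (hflow.add hduhamel).congr_deriv ?_
  simp only [BoundedContinuousFunction.add_apply, BoundedContinuousFunction.smul_apply,
    modeDuhamel_apply, smul_eq_mul]
  ring

variable {y : ℕ →ᵇ ℝ} {ε : ℝ} {b g : EvenModes}

theorem coeff_zero_of_eq_linearFlow_add (hy : y 0 = 0) (hb : b = linearFlow y + ε • modeDuhamel g) :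
    coeff b 0 = 0 := by
  funext t
  simp [coeff, hb, linearFlow_apply, modeDuhamel_apply, hy]

theorem hasDerivAt_coeff_of_eq_linearFlow_add (hb : b = linearFlow y + ε • modeDuhamel g) (k : ℤ)
    {t : ℝ} (ht : 0 < t) : HasDerivAt (coeff b k)
      (-(k : ℝ) ^ 4 * coeff b k t - ε * ((k : ℝ) ^ 2 * coeff g k t)) t := by
  subst hb
  refine ((hasDerivAt_linearFlow_add_modeDuhamel y ε g k.natAbs ht).const_mul
    (modeWeight k)).congr_deriv ?_
  have hsq : (k.natAbs : ℝ) ^ 2 = (k : ℝ) ^ 2 := by rw [Nat.cast_natAbs, Int.cast_abs, sq_abs]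
  have hfourth : (k.natAbs : ℝ) ^ 4 = (k : ℝ) ^ 4 := by
    rw [Nat.cast_natAbs, Int.cast_abs, (by decide : Even 4).pow_abs]
  rw [hsq, hfourth, coeff, coeff]
  ring

theorem isSpectralSolution_of_eq_linearFlow_add (hy : y 0 = 0)
    (hb : b = linearFlow y + ε • modeDuhamel (slopeFlux b)) :
    IsSpectralSolution ε (coeff b / freq) (coeff (modeMul b (modeMul b b))) where
  rapidDecay := (rapidDecay_coeff b).div_freq
  rapidDecay_cube := rapidDecay_coeff _
  cube_eq := by
    rw [cosSeriesDeriv_coeff_modeMul, cosSeriesDeriv_coeff_modeMul,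
      sinSeriesDeriv_one_div_freq (coeff_zero_of_eq_linearFlow_add hy hb), pow_succ', sq]
  hasDerivAt k t ht := by
    refine ((hasDerivAt_coeff_of_eq_linearFlow_add hb k ht).div_const (k : ℝ)).congr_deriv ?_
    simp only [spectralRate, slopeFlux, coeff_sub, freq, Pi.sub_apply, Pi.mul_apply, Pi.pow_apply,
      Pi.smul_apply, Pi.div_apply, smul_eq_mul]
    rcases eq_or_ne k 0 with rfl | hk
    · simp
    · field_simp
      ring

theorem eventually_exists_isSpectralSolution (hy : y 0 = 0) {η : ℝ} (hη : 0 < η) :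
    ∀ᶠ ε in 𝓝 (0 : ℝ), ∃ s q, IsSpectralSolution ε s q ∧ ∀ p,
      ‖sinSeriesDeriv 1 s p - cosSeriesDeriv 0 0 (coeff (linearFlow y)) p‖ ≤ η := by
  have hclose : ∀ᶠ b in 𝓝 (linearFlow y), ‖b - linearFlow y‖ * ∑' k, modeWeight k < η :=
    (by fun_prop : Continuous fun b => ‖b - linearFlow y‖ * ∑' k, modeWeight k).tendsto' _ 0
      (by simp) |>.eventually_lt_const hη
  have hF : ContDiffAt ℝ 1 (fun b => modeDuhamel (slopeFlux b)) (linearFlow y) :=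
    (modeDuhamel.contDiff.comp contDiff_slopeFlux).contDiffAt
  filter_upwards [eventually_exists_eq_add_smul hF hclose] with ε ⟨b, hb_close, hb⟩
  refine ⟨_, _, isSpectralSolution_of_eq_linearFlow_add hy hb, fun p => ?_⟩
  rw [sinSeriesDeriv_one_div_freq (coeff_zero_of_eq_linearFlow_add hy hb), ← Pi.sub_apply,
    ← (rapidDecay_coeff b).cosSeriesDeriv_sub (rapidDecay_coeff _), ← coeff_sub]
  exact (norm_cosSeriesDeriv_coeff_le _ p).trans hb_close.le

end FixedPoint

section Rescaling

/-- `t ↦ τ + α * t`, `x ↦ κ * x` as a change of variables that keeps slopes unchanged. -/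
def rescale (τ α κ : ℝ) (h : ℝ → ℝ → ℝ) (t x : ℝ) : ℝ := h (τ + α * t) (κ * x) / κ

theorem deriv_rescale {κ : ℝ} (hκ : κ ≠ 0) (τ α : ℝ) (h : ℝ → ℝ → ℝ) (t : ℝ) :
    deriv (rescale τ α κ h t) = fun x => deriv (h (τ + α * t)) (κ * x) := by
  funext x
  unfold rescale
  rw [deriv_div_const, deriv_comp_mul_left, smul_eq_mul, mul_div_cancel_left₀ _ hκ]

theorem solvesThinFilm_rescale {a ν τ α κ : ℝ} {I J : Set ℝ} {h : ℝ → ℝ → ℝ}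
    (hh : SolvesThinFilm a ν I h) (hκ : κ ≠ 0) (hJ : MapsTo (fun t => τ + α * t) J I) :
    SolvesThinFilm (α * a / κ ^ 2) (α * ν / κ ^ 4) J (rescale τ α κ h) := by
  intro x t ht
  have htime : HasDerivWithinAt (fun t => τ + α * t) α J t := by
    simpa using (((hasDerivAt_id t).const_mul α).const_add τ).hasDerivWithinAt
  have hflux := deriv_comp_mul_left κ
    (fun y => deriv (h (τ + α * t)) y ^ 3 - deriv (h (τ + α * t)) y) x
  have hfourth : iteratedDeriv 4 (rescale τ α κ h t) x =
      κ ^ 3 * iteratedDeriv 4 (h (τ + α * t)) (κ * x) := by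
    rw [show rescale τ α κ h t = fun y => κ⁻¹ * h (τ + α * t) (κ * y) from
      funext fun y => div_eq_inv_mul _ _, iteratedDeriv_const_mul_field,
      iteratedDeriv_comp_mul_left]
    field_simp
    rw [smul_eq_mul]
  rw [deriv_rescale hκ, hflux, hfourth]
  refine (((hh (κ * x) _ (hJ ht)).comp t htime hJ).div_const κ).congr_deriv ?_
  rw [smul_eq_mul]
  field_simp

/-- A smooth solution of the thin-film equation (see `SolvesThinFilm`) on `I × ℝ` that is odd and
`2π`-periodic in `x`. -/
structure IsOddPeriodicSolution (a ν : ℝ) (I : Set ℝ) (h : ℝ → ℝ → ℝ) : Prop where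
  periodic : ∀ t ∈ I, Function.Periodic (h t) (2 * π)
  odd : ∀ t ∈ I, Function.Odd (h t)
  contDiffOn : ContDiffOn ℝ ∞ (fun p : ℝ × ℝ => h p.1 p.2) (I ×ˢ univ)
  solvesThinFilm : SolvesThinFilm a ν I h

theorem isOddPeriodicSolution_rescale {a ν τ α : ℝ} {K : ℕ} {I J : Set ℝ} {h : ℝ → ℝ → ℝ}
    (hh : IsOddPeriodicSolution a ν I h) (hK : K ≠ 0) (hJ : MapsTo (fun t => τ + α * t) J I) :
    IsOddPeriodicSolution (α * a / K ^ 2) (α * ν / K ^ 4) J (rescale τ α K h) where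
  periodic t ht x := by
    have hperiodic := (hh.periodic _ (hJ ht)).nat_mul K (K * x)
    rw [← mul_add] at hperiodic
    simp only [rescale, hperiodic]
  odd t ht x := by
    simp only [rescale, mul_neg, (hh.odd _ (hJ ht)) _, neg_div]
  contDiffOn :=
    (hh.contDiffOn.comp (t := I ×ˢ univ) (s := J ×ˢ univ)
      (f := fun p : ℝ × ℝ => (τ + α * p.1, (K : ℝ) * p.2)) (by fun_prop)
      fun p hp => ⟨hJ hp.1, mem_univ _⟩).div_const K
  solvesThinFilm := solvesThinFilm_rescale hh.solvesThinFilm (Nat.cast_ne_zero.2 hK) hJ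

theorem IsOddPeriodicSolution.contDiff {a ν t : ℝ} {I : Set ℝ} {h : ℝ → ℝ → ℝ}
    (hh : IsOddPeriodicSolution a ν I h) (ht : t ∈ I) : ContDiff ℝ ∞ (h t) :=
  hh.contDiffOn.comp_contDiff (f := fun x => (t, x)) (by fun_prop) fun x => ⟨ht, mem_univ x⟩

theorem IsSpectralSolution.isOddPeriodicSolution {ε : ℝ} {s q : ℤ → ℝ → ℝ}
    (h : IsSpectralSolution ε s q) :
    IsOddPeriodicSolution ε 1 (Ioi 0) fun t x => sinSeriesDeriv 0 s (t, x) where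
  periodic t _ := cosSeriesDeriv_periodic _ 0 s t
  odd t _ := sinSeriesDeriv_odd s t
  contDiffOn := h.contDiffOn
  solvesThinFilm := h.solvesThinFilm

theorem exists_isOddPeriodicSolution_slope_near_linearFlow {y : ℕ →ᵇ ℝ} (hy : y 0 = 0) {η ν : ℝ}
    (hη : 0 < η) (hν : 0 < ν) :
    ∃ (h : ℝ → ℝ → ℝ) (α κ : ℝ), 0 < α ∧ IsOddPeriodicSolution 1 ν (Ici 0) h ∧ ∀ t x,
      |deriv (h t) x - cosSeriesDeriv 0 0 (coeff (linearFlow y)) (1 + α * t, κ * x)| ≤ η := by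
  have hsmall : Tendsto (fun K : ℕ => (ν * (K : ℝ) ^ 2)⁻¹) atTop (𝓝 0) :=
    tendsto_inv_atTop_zero.comp (((tendsto_pow_atTop two_ne_zero).comp
      tendsto_natCast_atTop_atTop).const_mul_atTop hν)
  obtain ⟨K, ⟨s, q, hsol, hclose⟩, hK⟩ := ((hsmall.eventually
    (eventually_exists_isSpectralSolution hy hη)).and (eventually_ne_atTop 0)).exists
  have hK' : (K : ℝ) ≠ 0 := Nat.cast_ne_zero.2 hK
  have hα : 0 < ν * (K : ℝ) ^ 4 := by positivity
  refine ⟨rescale 1 (ν * K ^ 4) K fun t x => sinSeriesDeriv 0 s (t, x), ν * K ^ 4, K, hα, ?_,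
    fun t x => ?_⟩
  · have hJ : MapsTo (fun t => 1 + ν * (K : ℝ) ^ 4 * t) (Ici 0) (Ioi 0) := fun t ht =>
      add_pos_of_pos_of_nonneg one_pos (mul_nonneg hα.le ht)
    convert isOddPeriodicSolution_rescale hsol.isOddPeriodicSolution hK hJ using 1 <;> field_simp
  · rw [deriv_rescale hK', hsol.deriv_space]
    exact hclose _

end Rescaling

section Overshoot

/-- Finitely many Fourier coefficients, divided by `modeWeight`: the initial values that
`linearFlow` expects for the trigonometric polynomial `∑ k : ℤ, a |k| * cos (k * x)`. -/
def trigPolyData (a : ℕ →₀ ℝ) : ℕ →ᵇ ℝ :=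
  .ofNormedAddCommGroupDiscrete (fun n => a n / modeWeight n)
    (∑ n ∈ a.support, ‖a n / modeWeight n‖) fun n => by
      by_cases hn : n ∈ a.support
      · exact Finset.single_le_sum (f := fun n : ℕ => ‖a n / modeWeight n‖)
          (fun _ _ => norm_nonneg _) hn
      · rw [Finsupp.notMem_support_iff.1 hn, zero_div, norm_zero]
        positivity

theorem trigPolyData_apply (a : ℕ →₀ ℝ) (n : ℕ) : trigPolyData a n = a n / modeWeight n := rfl

theorem coeff_linearFlow_trigPolyData (a : ℕ →₀ ℝ) (n : ℕ) {t : ℝ} (ht : 0 ≤ t) :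
    coeff (linearFlow (trigPolyData a)) n t = a n * exp (-((n : ℝ) ^ 4 * t)) := by
  rw [coeff, linearFlow_apply, trigPolyData_apply, Int.natAbs_natCast, max_eq_left ht, ← mul_assoc,
    mul_div_cancel₀ _ (modeWeight_pos n).ne']

theorem cosSeriesDeriv_coeff_linearFlow_trigPolyData {a : ℕ →₀ ℝ} (ha : a 0 = 0) {t : ℝ}
    (ht : 0 ≤ t) (x : ℝ) : cosSeriesDeriv 0 0 (coeff (linearFlow (trigPolyData a))) (t, x) =
      a.sum fun n c => 2 * (c * exp (-((n : ℝ) ^ 4 * t)) * cos (n * x)) := by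
  let f (k : ℤ) : ℝ := coeff (linearFlow (trigPolyData a)) k t * cos (k * x)
  have hf_even (n : ℕ) : f (-n) = f n := by
    have := coeff_even (linearFlow (trigPolyData a)) t n
    simp only [f, this, Int.cast_neg, neg_mul, cos_neg]
  have hf_zero : f 0 = 0 := by
    have := coeff_linearFlow_trigPolyData a 0 ht
    simp_all [f]
  have hf : HasSum (fun n : ℕ => f n)
      (a.sum fun n c => c * exp (-((n : ℝ) ^ 4 * t)) * cos (n * x)) := by
    simp only [f, coeff_linearFlow_trigPolyData a _ ht, Int.cast_natCast]
    exact hasSum_sum_of_ne_finset_zero fun n hn => by simp [Finsupp.notMem_support_iff.1 hn]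
  have hf_int := hf.of_nat_of_neg (by simpa only [hf_even] using hf)
  rw [cosSeriesDeriv_zero_zero, hf_int.tsum_eq, hf_zero, sub_zero, ← two_mul, Finsupp.mul_sum]

/-- A solution of `∂_t u = -∂_x⁴ u` whose maximum, initially `968 / 1000` and attained at `x = 0`,
exceeds `1` at time `1 / 81`: the mode `cos 3x` that flattens the initial profile decays faster than
the mode `cos x`. -/
def overshoot (t x : ℝ) : ℝ :=
  121 / 1000 * (9 * exp (-t) * cos x - exp (-(81 * t)) * cos (3 * x))

theorem abs_overshoot_zero_le (x : ℝ) : |overshoot 0 x| ≤ 968 / 1000 := by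
  have hcos : overshoot 0 x = 121 / 1000 * (12 * cos x - 4 * cos x ^ 3) := by
    simp only [overshoot, neg_zero, mul_zero, exp_zero, cos_three_mul]
    ring
  have hlower := neg_one_le_cos x
  have hupper := cos_le_one x
  rw [hcos, abs_le]
  constructor
  · nlinarith [mul_nonneg (sq_nonneg (cos x + 1)) (by linarith : (0 : ℝ) ≤ 2 - cos x)]
  · nlinarith [mul_nonneg (sq_nonneg (cos x - 1)) (by linarith : (0 : ℝ) ≤ 2 + cos x)]

theorem le_overshoot : 101 / 100 ≤ overshoot (1 / 81) 0 := by
  have hslow : 1 - 1 / 81 ≤ exp (-(1 / 81)) := one_sub_le_exp_neg _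
  have hfast : exp (-1) ≤ 1 / 2 := by
    rw [exp_neg, one_div]
    exact inv_anti₀ two_pos (by linarith [add_one_le_exp (1 : ℝ)])
  norm_num [overshoot] at hslow hfast ⊢
  linarith

theorem exists_linearFlow_eq_overshoot : ∃ y : ℕ →ᵇ ℝ, y 0 = 0 ∧ ∀ t ≥ 0, ∀ x,
    cosSeriesDeriv 0 0 (coeff (linearFlow y)) (t, x) = overshoot (t - 1) x := by
  let a : ℕ →₀ ℝ := .single 1 (9 * (121 / 2000) * exp 1) + .single 3 (-(121 / 2000) * exp 81)
  have ha : a 0 = 0 := by simp [a]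
  refine ⟨trigPolyData a, by simp [trigPolyData_apply, ha], fun t ht x => ?_⟩
  rw [cosSeriesDeriv_coeff_linearFlow_trigPolyData ha ht,
    Finsupp.sum_add_index' (by simp) (by intros; ring), Finsupp.sum_single_index (by simp),
    Finsupp.sum_single_index (by simp), overshoot, show -(t - 1) = 1 + -t by ring,
    show -(81 * (t - 1)) = 81 + -(81 * t) by ring, exp_add, exp_add]
  norm_num
  ring

end Overshoot

/-- Theorem 1.5, disproving Conjecture 1 in 1D: for every `ν > 0`
there exist smooth `2π`-periodic mean-zero initial data `h₀` with `‖h₀'‖_∞ < 1`, a time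
`t₀ > 0`, and a smooth `2π`-periodic classical solution `h` of
`∂_t h = ∂_x((∂_x h)³ − ∂_x h) − ν ∂_x⁴ h` on `[0,t₀]` with `h(0,·) = h₀` and
`‖∂_x h(t₀,·)‖_∞ > 1`. -/
theorem stmt4 (ν : ℝ) (hν : 0 < ν) :
    ∃ (h₀ : ℝ → ℝ) (t₀ : ℝ) (h : ℝ → ℝ → ℝ),
      ContDiff ℝ (⊤ : ℕ∞) h₀ ∧
      Function.Periodic h₀ (2 * Real.pi) ∧
      (∫ x in Icc (-Real.pi) Real.pi, h₀ x) = 0 ∧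
      (⨆ x : ℝ, |deriv h₀ x|) < 1 ∧
      0 < t₀ ∧
      (∀ t ∈ Icc 0 t₀, Function.Periodic (h t) (2 * Real.pi)) ∧
      ContDiffOn ℝ (⊤ : ℕ∞) (fun p : ℝ × ℝ => h p.1 p.2) (Icc 0 t₀ ×ˢ univ) ∧
      h 0 = h₀ ∧
      (∀ (x : ℝ), ∀ t ∈ Icc 0 t₀,
        HasDerivWithinAt (fun s => h s x)
          (deriv (fun y => (deriv (h t) y) ^ 3 - deriv (h t) y) x
            - ν * iteratedDeriv 4 (h t) x) (Icc 0 t₀) t) ∧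
      ∃ x : ℝ, 1 < |deriv (h t₀) x| := by
  obtain ⟨y, hy, hflow⟩ := exists_linearFlow_eq_overshoot
  obtain ⟨h, α, κ, hα, hsol, hclose⟩ :=
    exists_isOddPeriodicSolution_slope_near_linearFlow hy (by norm_num : (0 : ℝ) < 5 / 1000) hν
  have hslope (t : ℝ) (ht : 0 ≤ t) (x : ℝ) :
      |deriv (h t) x - overshoot (α * t) (κ * x)| ≤ 5 / 1000 := by
    simpa only [hflow _ (by positivity : 0 ≤ 1 + α * t), add_sub_cancel_left] using hclose t x
  have hinitial (x : ℝ) : |deriv (h 0) x| ≤ 973 / 1000 := by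
    have hdiff := hslope 0 le_rfl x
    rw [mul_zero] at hdiff
    linarith [abs_sub_abs_le_abs_sub (deriv (h 0) x) (overshoot 0 (κ * x)),
      abs_overshoot_zero_le (κ * x)]
  have hfinal : 1 < |deriv (h (1 / (81 * α))) 0| := by
    have hdiff := hslope (1 / (81 * α)) (by positivity) 0
    rw [show α * (1 / (81 * α)) = 1 / 81 by field_simp, mul_zero, abs_le] at hdiff
    linarith [le_abs_self (deriv (h (1 / (81 * α))) 0), le_overshoot]
  refine ⟨h 0, 1 / (81 * α), h, hsol.contDiff self_mem_Ici, hsol.periodic 0 self_mem_Ici,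
    setIntegral_eq_zero_of_odd _ (hsol.odd 0 self_mem_Ici) (by simp),
    (ciSup_le hinitial).trans_lt (by norm_num), by positivity, fun t ht => hsol.periodic t ht.1,
    hsol.contDiffOn.mono (prod_mono_left Icc_subset_Ici_self), rfl, fun x t ht => ?_, 0, hfinal⟩
  simpa using (hsol.solvesThinFilm x t ht.1).mono Icc_subset_Ici_self
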